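/- Grigorchuk–Nekrashevych–Suschanskiǐ: For every d ≥ 2, the group ℛ_d of rational homeomorphisms of the d-ary Cantor space 𝔠_d is isomorphic as a group to the rational group ℛ = ℛ_2 of rational homeomorphisms of the binary Cantor space. -/

import Mathlib

/-- Concatenation of a finite word with an infinite sequence. -/
def wordAppend {A : Type*} (α : List A) (x : ℕ → A) : ℕ → A :=
  fun n => if h : n < α.length then α.get ⟨n, h⟩ else x (n - α.length)

/-- The cone determined by a finite word: all sequences having it as a prefix. -/
def cone {A : Type*} (α : List A) : Set (ℕ → A) := Set.range (wordAppend α)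

/-- `g` is the local action of the homeomorphism `f` at the word `α`:
there is a word `β` with `f (α ⌢ x) = β ⌢ (g x)` for all `x`, and `β` is the longest
common prefix of the image of the cone `C_α` (witnessed by two image points that
differ in the coordinate immediately after `β`). -/
def IsLocalAction {A : Type*} [TopologicalSpace A] (f : (ℕ → A) ≃ₜ (ℕ → A)) (α : List A)
    (g : (ℕ → A) → (ℕ → A)) : Prop :=
  ∃ β : List A, (∀ x, f (wordAppend α x) = wordAppend β (g x)) ∧ ∃ x y, g x 0 ≠ g y 0

/-- A homeomorphism of a Cantor space of sequences is rational if it has only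
finitely many distinct local actions. -/
def IsRational {A : Type*} [TopologicalSpace A] (f : (ℕ → A) ≃ₜ (ℕ → A)) : Prop :=
  {g | ∃ α, IsLocalAction f α g}.Finite

/-- The group of self-homeomorphisms of a topological space, under composition. -/
instance homeoGroup {X : Type*} [TopologicalSpace X] : Group (X ≃ₜ X) where
  mul f g := g.trans f
  one := Homeomorph.refl X
  inv := Homeomorph.symm
  mul_assoc _ _ _ := rfl
  one_mul _ := Homeomorph.ext fun _ => rfl
  mul_one _ := Homeomorph.ext fun _ => rfl
  inv_mul_cancel := Homeomorph.self_trans_symm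

/-!
A complete prefix code `c : A → List B` turns a sequence `x` over `A` into the sequence
`c (x 0) ⌢ c (x 1) ⌢ ⋯` over `B`, and this encoding is a homeomorphism of Cantor spaces. Encoding
has a single local state. Decoding has finitely many, because every word over `B` is a
concatenation of code words followed by a word of bounded length, and only this last word has to be
remembered. The unary code `0, 10, 110, …, 1⋯10, 1⋯11` is complete, so every finite alphabet with
at least two letters has such a code over `Bool`. Finite-state maps compose, hence conjugation by
the resulting homeomorphism matches the two rational groups.
-/

section WordAppend

variable {A : Type*}

theorem wordAppend_nil (x : ℕ → A) : wordAppend [] x = x := rfl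

theorem wordAppend_cons_zero (a : A) (α : List A) (x : ℕ → A) :
    wordAppend (a :: α) x 0 = a := rfl

theorem wordAppend_cons_succ (a : A) (α : List A) (x : ℕ → A) (n : ℕ) :
    wordAppend (a :: α) x (n + 1) = wordAppend α x n := by
  simp [wordAppend]

theorem wordAppend_apply_of_lt {α : List A} {n : ℕ} (h : n < α.length) (x : ℕ → A) :
    wordAppend α x n = α[n] := by
  simp [wordAppend, h]

theorem wordAppend_apply_of_le {α : List A} {n : ℕ} (h : α.length ≤ n) (x : ℕ → A) :
    wordAppend α x n = x (n - α.length) := by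
  simp [wordAppend, h.not_gt]

theorem wordAppend_cons (a : A) (α : List A) (x : ℕ → A) :
    wordAppend (a :: α) x = wordAppend [a] (wordAppend α x) := by
  funext n
  cases n with
  | zero => rfl
  | succ n => simp only [wordAppend_cons_succ, wordAppend_nil]

theorem wordAppend_append (α β : List A) (x : ℕ → A) :
    wordAppend (α ++ β) x = wordAppend α (wordAppend β x) := by
  induction α with
  | nil => rfl
  | cons a α ih => rw [List.cons_append, wordAppend_cons, ih, ← wordAppend_cons]

theorem wordAppend_injective (α : List A) : Function.Injective (wordAppend α) := by
  intro x y hxy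
  funext n
  simpa [wordAppend_apply_of_le] using congrFun hxy (n + α.length)

theorem mem_cone_cons_iff {a : A} {α : List A} {x : ℕ → A} :
    x ∈ cone (a :: α) ↔ x 0 = a ∧ (fun n => x (n + 1)) ∈ cone α := by
  constructor
  · rintro ⟨y, rfl⟩
    exact ⟨rfl, y, funext fun n => (wordAppend_cons_succ a α y n).symm⟩
  · rintro ⟨rfl, y, hy⟩
    refine ⟨y, funext fun n => ?_⟩
    cases n with
    | zero => rfl
    | succ n => rw [wordAppend_cons_succ, hy]

theorem mem_cone_nil (x : ℕ → A) : x ∈ cone ([] : List A) := ⟨x, rfl⟩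

theorem isPrefix_of_wordAppend_mem_cone {α β : List A} {x : ℕ → A}
    (hx : wordAppend β x ∈ cone α) (hle : α.length ≤ β.length) : α <+: β := by
  obtain ⟨y, hy⟩ := hx
  refine List.prefix_iff_getElem.2 ⟨hle, fun n hn => ?_⟩
  rw [← wordAppend_apply_of_lt hn y, hy, wordAppend_apply_of_lt (hn.trans_le hle)]

end WordAppend

section Reduction

variable {X B : Type*}

/-- `g` is obtained from the family of sequences `k` by deleting the longest common prefix of all
its members. The local action of `f` at `α` is the reduction of `x ↦ f (α ⌢ x)`. -/
def IsReduction (k g : X → ℕ → B) : Prop :=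
  ∃ β : List B, (∀ x, k x = wordAppend β (g x)) ∧ ∃ x y, g x 0 ≠ g y 0

theorem exists_isReduction_of_ne {k : X → ℕ → B} {x y : X} (hxy : k x ≠ k y) :
    ∃ g, IsReduction k g := by
  classical
  have hdiff : ∃ n, ∃ x y, k x n ≠ k y n :=
    let ⟨n, hn⟩ := Function.ne_iff.1 hxy
    ⟨n, x, y, hn⟩
  let n := Nat.find hdiff
  have hagree : ∀ i < n, ∀ z, k z i = k x i := fun i hi z => by
    by_contra hne
    exact Nat.find_min hdiff hi ⟨z, x, hne⟩
  refine ⟨fun z i => k z (i + n), List.ofFn fun i : Fin n => k x i, fun z => funext fun i => ?_, ?_⟩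
  · rcases lt_or_ge i n with hi | hi
    · rw [wordAppend_apply_of_lt (by simpa using hi), List.getElem_ofFn, hagree i hi]
    · simp only [wordAppend_apply_of_le, List.length_ofFn, hi, Nat.sub_add_cancel]
  · simpa only [zero_add] using Nat.find_spec hdiff

theorem IsReduction.of_wordAppend {k g : X → ℕ → B} {β : List B}
    (h : IsReduction (fun x => wordAppend β (k x)) g) : IsReduction k g := by
  obtain ⟨γ, hγ, hg⟩ := h
  induction β generalizing γ with
  | nil => exact ⟨γ, hγ, hg⟩
  | cons b β ih =>
    cases γ with
    | nil =>
      obtain ⟨x, y, hxy⟩ := hg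
      have hhead : ∀ z, g z 0 = b := fun z => (congrFun (hγ z) 0).symm
      exact absurd ((hhead x).trans (hhead y).symm) hxy
    | cons c γ =>
      refine ih γ fun x => funext fun n => ?_
      simpa only [wordAppend_cons_succ] using congrFun (hγ x) (n + 1)

theorem IsReduction.eq {k g g' : X → ℕ → B} (h : IsReduction k g) (h' : IsReduction k g') :
    g = g' := by
  obtain ⟨β, hβ, x, y, hxy⟩ := h
  obtain ⟨γ, hγ, -⟩ : IsReduction g g' := .of_wordAppend (β := β) <| by
    simpa only [← hβ] using h'
  cases γ with
  | nil => exact funext hγ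
  | cons c γ =>
    have hhead : ∀ z, g z 0 = c := fun z => congrFun (hγ z) 0
    exact absurd ((hhead x).trans (hhead y).symm) hxy

end Reduction

section FiniteState

variable {A B C : Type*}

/-- A map of sequence spaces that can be computed by a finite-state transducer: up to an output
prefix, finitely many maps describe it on all cones. In contrast to `IsRational` the output prefix
need not be the longest one, which makes the notion manifestly stable under composition. -/
def IsFiniteState (F : (ℕ → A) → ℕ → B) : Prop :=
  ∃ S : Set ((ℕ → A) → ℕ → B), S.Finite ∧
    ∀ α, ∃ s ∈ S, ∃ β, ∀ x, F (wordAppend α x) = wordAppend β (s x)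

theorem IsFiniteState.comp {F : (ℕ → B) → ℕ → C} {G : (ℕ → A) → ℕ → B}
    (hF : IsFiniteState F) (hG : IsFiniteState G) : IsFiniteState (F ∘ G) := by
  obtain ⟨S, hS, hFS⟩ := hF
  obtain ⟨T, hT, hGT⟩ := hG
  refine ⟨Set.image2 (· ∘ ·) S T, hS.image2 _ hT, fun α => ?_⟩
  obtain ⟨t, ht, β, hβ⟩ := hGT α
  obtain ⟨s, hs, γ, hγ⟩ := hFS β
  exact ⟨s ∘ t, Set.mem_image2_of_mem hs ht, γ, fun x => by
    simp only [Function.comp_apply, hβ, hγ]⟩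

theorem IsFiniteState.finite_setOf_isReduction {F : (ℕ → A) → ℕ → B} (hF : IsFiniteState F) :
    {g | ∃ α, IsReduction (fun x => F (wordAppend α x)) g}.Finite := by
  obtain ⟨S, hS, hFS⟩ := hF
  have hfin : (⋃ s ∈ S, {g | IsReduction s g}).Finite :=
    hS.biUnion fun s _ => Set.Subsingleton.finite fun g hg g' hg' => IsReduction.eq hg hg'
  refine hfin.subset ?_
  rintro g ⟨α, hg⟩
  obtain ⟨s, hs, β, hβ⟩ := hFS α
  simp only [hβ] at hg
  exact Set.mem_biUnion hs hg.of_wordAppend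

theorem exists_isLocalAction [TopologicalSpace A] [Nontrivial A] (f : (ℕ → A) ≃ₜ (ℕ → A))
    (α : List A) : ∃ g, IsLocalAction f α g :=
  let ⟨_, _, hxy⟩ := exists_pair_ne (ℕ → A)
  exists_isReduction_of_ne ((f.injective.comp (wordAppend_injective α)).ne hxy)

theorem isRational_iff_isFiniteState [TopologicalSpace A] [Nontrivial A]
    (f : (ℕ → A) ≃ₜ (ℕ → A)) : IsRational f ↔ IsFiniteState f := by
  refine ⟨fun hf => ⟨_, hf, fun α => ?_⟩, IsFiniteState.finite_setOf_isReduction⟩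
  obtain ⟨g, β, hβ, hg⟩ := exists_isLocalAction f α
  exact ⟨g, ⟨α, β, hβ, hg⟩, β, hβ⟩

end FiniteState

section Code

variable {A B : Type*}

/-- A complete prefix code over `B` with code words indexed by `A`, expressed through infinite
sequences: the cones of the code words partition the sequence space. -/
def IsCompletePrefixCode (c : A → List B) : Prop :=
  ∀ y : ℕ → B, ∃! a, y ∈ cone (c a)

theorem IsCompletePrefixCode.ne_nil [Nontrivial A] [Nonempty B] {c : A → List B}
    (hc : IsCompletePrefixCode c) (a : A) : c a ≠ [] := by
  intro hnil
  obtain ⟨a', ha'⟩ := exists_ne a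
  let y := wordAppend (c a') fun _ => Classical.arbitrary B
  exact ha' ((hc y).unique ⟨_, rfl⟩ (hnil ▸ mem_cone_nil y))

theorem IsCompletePrefixCode.comp_equiv {A' : Type*} {c : A → List B}
    (hc : IsCompletePrefixCode c) (e : A' ≃ A) : IsCompletePrefixCode (c ∘ e) :=
  fun y => e.existsUnique_congr_left.2 <| by simpa using hc y

theorem isCompletePrefixCode_nil [Unique A] :
    IsCompletePrefixCode fun _ : A => ([] : List B) :=
  fun y => ⟨default, mem_cone_nil y, fun a _ => Unique.eq_default a⟩

theorem IsCompletePrefixCode.option {c : A → List Bool} (hc : IsCompletePrefixCode c) :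
    IsCompletePrefixCode fun o : Option A => o.elim [false] fun a => true :: c a := by
  intro y
  cases hy : y 0 with
  | false =>
    refine ⟨none, mem_cone_cons_iff.2 ⟨hy, mem_cone_nil _⟩, fun o ho => ?_⟩
    cases o with
    | none => rfl
    | some a => simp [mem_cone_cons_iff, hy] at ho
  | true =>
    obtain ⟨a, ha, hunique⟩ := hc fun n => y (n + 1)
    refine ⟨some a, mem_cone_cons_iff.2 ⟨hy, ha⟩, fun o ho => ?_⟩
    cases o with
    | none => simp [mem_cone_cons_iff, hy] at ho
    | some a' => rw [hunique a' (mem_cone_cons_iff.1 ho).2]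

theorem exists_isCompletePrefixCode_bool (A : Type*) [Finite A] [Nonempty A] :
    ∃ c : A → List Bool, IsCompletePrefixCode c := by
  suffices h : Nonempty A → ∃ c : A → List Bool, IsCompletePrefixCode c from h ‹_›
  induction A using Finite.induction_empty_option with
  | of_equiv e ih =>
    intro hA
    obtain ⟨c, hc⟩ := ih (e.nonempty_congr.2 hA)
    exact ⟨c ∘ e.symm, hc.comp_equiv e.symm⟩
  | h_empty => exact fun h => h.elim nofun
  | @h_option A _ ih =>
    intro
    rcases isEmpty_or_nonempty A with hA | hA
    · exact ⟨_, isCompletePrefixCode_nil⟩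
    · obtain ⟨c, hc⟩ := ih hA
      exact ⟨_, hc.option⟩

-- Greedy parsing: a word longer than every code word starts with one of them.
theorem IsCompletePrefixCode.exists_flatMap_append_eq {c : A → List B}
    (hc : IsCompletePrefixCode c) (hne : ∀ a, c a ≠ []) {L : ℕ} (hL : ∀ a, (c a).length ≤ L)
    (β : List B) : ∃ (α : List A) (γ : List B), γ.length ≤ L ∧ β = α.flatMap c ++ γ := by
  induction hn : β.length using Nat.strong_induction_on generalizing β with
  | _ n ih =>
    rcases le_or_gt β.length L with hβ | hβ
    · exact ⟨[], β, hβ, rfl⟩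
    have hβ0 : β ≠ [] := List.ne_nil_of_length_pos (by omega)
    obtain ⟨a, ha, -⟩ := hc (wordAppend β fun _ => β.head hβ0)
    obtain ⟨β', rfl⟩ := isPrefix_of_wordAppend_mem_cone ha ((hL a).trans hβ.le)
    have hpos := List.length_pos_of_ne_nil (hne a)
    rw [List.length_append] at hn
    obtain ⟨α, γ, hγ, rfl⟩ := ih β'.length (by omega) β' rfl
    exact ⟨a :: α, γ, hγ, by simp⟩

end Code

section Encode

variable {A B : Type*} {c : A → List B} (hne : ∀ a, c a ≠ [])

/-- The infinite concatenation `c (x 0) ⌢ c (x 1) ⌢ ⋯`. As no code word is empty, the `n`-th letter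
is found by recursion on `n`, skipping one code word at a time. -/
def encode (hne : ∀ a, c a ≠ []) (x : ℕ → A) (n : ℕ) : B :=
  if h : n < (c (x 0)).length then (c (x 0))[n]
  else encode hne (fun i => x (i + 1)) (n - (c (x 0)).length)
termination_by n
decreasing_by
  have := List.length_pos_of_ne_nil (hne (x 0))
  omega

theorem encode_eq_wordAppend (x : ℕ → A) :
    encode hne x = wordAppend (c (x 0)) (encode hne fun i => x (i + 1)) := by
  funext n
  rw [encode]
  rfl

theorem encode_wordAppend (α : List A) (x : ℕ → A) :
    encode hne (wordAppend α x) = wordAppend (α.flatMap c) (encode hne x) := by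
  induction α with
  | nil => rfl
  | cons a α ih =>
    rw [encode_eq_wordAppend, List.flatMap_cons, wordAppend_append, ← ih]
    simp only [wordAppend_cons_zero, wordAppend_cons_succ]

theorem isFiniteState_encode : IsFiniteState (encode hne) :=
  ⟨{encode hne}, Set.finite_singleton _, fun α => ⟨_, rfl, _, encode_wordAppend hne α⟩⟩

theorem continuous_encode [TopologicalSpace A] [DiscreteTopology A] [TopologicalSpace B] :
    Continuous (encode hne) := by
  refine continuous_pi fun n => ?_
  induction n using Nat.strong_induction_on with
  | _ n ih =>
    have hcont : Continuous fun p : A × (ℕ → A) => wordAppend (c p.1) (encode hne p.2) n := by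
      refine continuous_prod_of_discrete_left.2 fun a => ?_
      rcases lt_or_ge n (c a).length with hn | hn
      · simpa only [wordAppend_apply_of_lt hn] using continuous_const
      · have hpos := List.length_pos_of_ne_nil (hne a)
        simpa only [wordAppend_apply_of_le hn] using ih (n - (c a).length) (by omega)
    have hsplit : Continuous fun x : ℕ → A => (x 0, fun i => x (i + 1)) := by fun_prop
    exact (hcont.comp hsplit).congr fun x => (congrFun (encode_eq_wordAppend hne x) n).symm

theorem IsCompletePrefixCode.head_eq_and_encode_tail_eq (hc : IsCompletePrefixCode c) {x x' : ℕ → A}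
    (h : encode hne x = encode hne x') :
    x 0 = x' 0 ∧ encode hne (fun i => x (i + 1)) = encode hne fun i => x' (i + 1) := by
  rw [encode_eq_wordAppend hne x, encode_eq_wordAppend hne x'] at h
  have hzero : x 0 = x' 0 := (hc _).unique ⟨_, rfl⟩ ⟨_, h.symm⟩
  rw [hzero] at h
  exact ⟨hzero, wordAppend_injective _ h⟩

theorem IsCompletePrefixCode.encode_injective (hc : IsCompletePrefixCode c) :
    Function.Injective (encode hne) := by
  intro x x' h
  funext n
  induction n generalizing x x' with
  | zero => exact (hc.head_eq_and_encode_tail_eq hne h).1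
  | succ _ ih => exact ih (hc.head_eq_and_encode_tail_eq hne h).2

theorem IsCompletePrefixCode.encode_surjective (hc : IsCompletePrefixCode c) :
    Function.Surjective (encode hne) := by
  choose letter rest hsplit using fun y => (hc y).exists
  intro y
  refine ⟨fun i => letter (rest^[i] y), funext fun n => ?_⟩
  induction n using Nat.strong_induction_on generalizing y with
  | _ n ih =>
    have hpos := List.length_pos_of_ne_nil (hne (letter y))
    rw [encode_eq_wordAppend, ← congrFun (hsplit y) n]
    rcases lt_or_ge n (c (letter y)).length with hn | hn
    · exact (wordAppend_apply_of_lt hn _).trans (wordAppend_apply_of_lt hn _).symm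
    · refine (wordAppend_apply_of_le hn _).trans (.trans ?_ (wordAppend_apply_of_le hn _).symm)
      exact ih _ (Nat.sub_lt_of_pos_le hpos hn) (rest y)

variable [TopologicalSpace A] [DiscreteTopology A] [Finite A] [TopologicalSpace B] [T2Space B]

/-- The homeomorphism of sequence spaces defined by a complete prefix code. -/
noncomputable def encodeHomeomorph (hc : IsCompletePrefixCode c) : (ℕ → A) ≃ₜ (ℕ → B) :=
  (continuous_encode hne).homeoOfEquivCompactToT2
    (f := Equiv.ofBijective _ ⟨hc.encode_injective hne, hc.encode_surjective hne⟩)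

theorem isFiniteState_encodeHomeomorph_symm [Finite B] (hc : IsCompletePrefixCode c) :
    IsFiniteState (encodeHomeomorph hne hc).symm := by
  set e := encodeHomeomorph hne hc
  obtain ⟨L, hL⟩ := (Set.finite_range fun a => (c a).length).bddAbove
  refine ⟨(fun γ x => e.symm (wordAppend γ x)) '' {γ | γ.length ≤ L},
    (List.finite_length_le B L).image _, fun β => ?_⟩
  obtain ⟨α, γ, hγ, rfl⟩ := hc.exists_flatMap_append_eq hne (fun a => hL ⟨a, rfl⟩) β
  refine ⟨_, ⟨γ, hγ, rfl⟩, α, fun x => e.symm_apply_eq.2 ?_⟩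
  calc wordAppend (α.flatMap c ++ γ) x
      = wordAppend (α.flatMap c) (e (e.symm (wordAppend γ x))) := by
        rw [wordAppend_append, e.apply_symm_apply]
    _ = e (wordAppend α (e.symm (wordAppend γ x))) := (encode_wordAppend hne α _).symm

end Encode

section Conjugation

/-- Conjugation by a homeomorphism, as an isomorphism of homeomorphism groups. -/
def homeoConj {X Y : Type*} [TopologicalSpace X] [TopologicalSpace Y] (e : X ≃ₜ Y) :
    (X ≃ₜ X) ≃* (Y ≃ₜ Y) where
  toFun f := (e.symm.trans f).trans e
  invFun f := (e.trans f).trans e.symm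
  left_inv f := by ext; simp
  right_inv f := by ext; simp
  map_mul' f g := Homeomorph.ext fun y =>
    congrArg (e ∘ f) (e.symm_apply_apply (g (e.symm y))).symm

variable {A B : Type*} [TopologicalSpace A] [Nontrivial A] [TopologicalSpace B] [Nontrivial B]

theorem isRational_homeoConj_symm_iff {e : (ℕ → A) ≃ₜ (ℕ → B)} (he : IsFiniteState e)
    (he' : IsFiniteState e.symm) (f : (ℕ → B) ≃ₜ (ℕ → B)) :
    IsRational ((homeoConj e).symm f) ↔ IsRational f := by
  rw [isRational_iff_isFiniteState, isRational_iff_isFiniteState]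
  refine ⟨fun h => ?_, fun h => he'.comp (h.comp he)⟩
  have hf : ⇑f = e ∘ (homeoConj e).symm f ∘ e.symm :=
    congrArg DFunLike.coe ((homeoConj e).apply_symm_apply f).symm
  exact hf ▸ he.comp (h.comp he')

end Conjugation

theorem exists_homeomorph_bool_isFiniteState (A : Type*) [TopologicalSpace A]
    [DiscreteTopology A] [Finite A] [Nontrivial A] :
    ∃ e : (ℕ → A) ≃ₜ (ℕ → Bool), IsFiniteState e ∧ IsFiniteState e.symm :=
  let ⟨_, hc⟩ := exists_isCompletePrefixCode_bool A
  ⟨encodeHomeomorph hc.ne_nil hc, isFiniteState_encode hc.ne_nil,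
    isFiniteState_encodeHomeomorph_symm hc.ne_nil hc⟩

theorem rational_group_d_ary_iso_binary_general {A B : Type*}
    [TopologicalSpace A] [DiscreteTopology A] [Finite A] [Nontrivial A]
    [TopologicalSpace B] [DiscreteTopology B] [Finite B] [Nontrivial B]
    (RA : Subgroup ((ℕ → A) ≃ₜ (ℕ → A))) (hRA : ∀ f, f ∈ RA ↔ IsRational f)
    (RB : Subgroup ((ℕ → B) ≃ₜ (ℕ → B))) (hRB : ∀ f, f ∈ RB ↔ IsRational f) :
    Nonempty (RA ≃* RB) := by
  obtain ⟨eA, heA, heA'⟩ := exists_homeomorph_bool_isFiniteState A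
  obtain ⟨eB, heB, heB'⟩ := exists_homeomorph_bool_isFiniteState B
  let e : (ℕ → A) ≃ₜ (ℕ → B) := eA.trans eB.symm
  have he : IsFiniteState e := heB'.comp heA
  have he' : IsFiniteState e.symm := heA'.comp heB
  have hmap : RA.map (homeoConj e).toMonoidHom = RB := by
    ext f
    rw [Subgroup.mem_map_equiv, hRA, hRB, isRational_homeoConj_symm_iff he he']
  exact ⟨((homeoConj e).subgroupMap RA).trans (MulEquiv.subgroupCongr hmap)⟩

/-!
Grigorchuk–Nekrashevych–Suschanskiǐ (2000): for every `d ≥ 2` the group `ℛ_d` of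
rational homeomorphisms of the `d`-ary Cantor space `ℕ → Fin d` is isomorphic to
the rational group `ℛ = ℛ_2` of rational homeomorphisms of the binary Cantor space
`ℕ → Bool`.  (The rational homeomorphisms do form subgroups; here these subgroups
are given by their defining membership property.)
-/
theorem rational_group_d_ary_iso_binary (d : ℕ) (hd : 2 ≤ d)
    (Rd : Subgroup ((ℕ → Fin d) ≃ₜ (ℕ → Fin d)))
    (hRd : ∀ f, f ∈ Rd ↔ IsRational f)
    (R2 : Subgroup ((ℕ → Bool) ≃ₜ (ℕ → Bool)))
    (hR2 : ∀ f, f ∈ R2 ↔ IsRational f) :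
    Nonempty (↥Rd ≃* ↥R2) := by
  have : Nontrivial (Fin d) := Fin.nontrivial_iff_two_le.2 hd
  exact rational_group_d_ary_iso_binary_general Rd hRd R2 hR2
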